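/- arXiv:2501.00122 — 2 statements merged into one kernel-verified Lean document; each statement's English description precedes it below -/
import Mathlib

section
/- Let (P₁, ε₁, Q₁, η₁) and (P₂, ε₂, Q₂, η₂) be two complementary pairs of idempotents in 𝒜, i.e., for i = 1, 2 there is a distinguished triangle Pᵢ ⟶εᵢ 𝟙 ⟶ηᵢ Qᵢ ⟶ Pᵢ⟦1⟧ with (Pᵢ, εᵢ) counital and (Qᵢ, ηᵢ) unital. Then P₁ ≅ P₂ if and only if Q₁ ≅ Q₂. -/
open CategoryTheory Category Limits MonoidalCategory Pretriangulated ZeroObject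

/-!
Tensoring the triangle `P ⟶ 𝟙 ⟶ Q` with `X`, on either side, shows that `ε` becomes invertible
exactly when `Q` kills `X`, and `η` exactly when `P` kills `X`. An isomorphism `P₁ ≅ P₂` transports
`P₁ ⊗ Q₁ = 0` and `Q₂ ⊗ P₂ = 0` to `P₂ ⊗ Q₁ = 0` and `Q₂ ⊗ P₁ = 0`, so `Q₁ ≅ Q₂ ⊗ Q₁ ≅ Q₂`; an
isomorphism `Q₁ ≅ Q₂` transports the same two vanishings to `P₁ ⊗ Q₂ = 0` and `Q₁ ⊗ P₂ = 0`, so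
`P₁ ≅ P₁ ⊗ P₂ ≅ P₂`.
-/

section Monoidal

variable {𝒞 : Type*} [Category 𝒞] [MonoidalCategory 𝒞] {A B : 𝒞}

/-- The comparison `A ≅ A ⊗ B ≅ B` of objects over the unit, available when their structure maps
become invertible after tensoring with the other object. It compares counital idempotents. -/
noncomputable def counitalComparisonIso (ε : A ⟶ 𝟙_ 𝒞) (ε' : B ⟶ 𝟙_ 𝒞)
    [IsIso (A ◁ ε')] [IsIso (ε ▷ B)] : A ≅ B :=
  (ρ_ A).symm ≪≫ (asIso (A ◁ ε')).symm ≪≫ asIso (ε ▷ B) ≪≫ λ_ B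

/-- The comparison `A ≅ A ⊗ B ≅ B` of objects under the unit, available when their structure maps
become invertible after tensoring with the other object. It compares unital idempotents. -/
noncomputable def unitalComparisonIso (η : 𝟙_ 𝒞 ⟶ A) (η' : 𝟙_ 𝒞 ⟶ B)
    [IsIso (A ◁ η')] [IsIso (η ▷ B)] : A ≅ B :=
  (ρ_ A).symm ≪≫ asIso (A ◁ η') ≪≫ (asIso (η ▷ B)).symm ≪≫ λ_ B

end Monoidal

section Pretriangulated

variable {𝒜 : Type*} [Category 𝒜] [MonoidalCategory 𝒜] [HasZeroObject 𝒜] [Preadditive 𝒜]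
  [HasShift 𝒜 ℤ] [∀ n : ℤ, (shiftFunctor 𝒜 n).Additive] [Pretriangulated 𝒜]

section DistinguishedTriangle

variable {T : Triangle 𝒜} (X : 𝒜)

lemma isZero_tensor_obj₃_iff_isIso_whiskerLeft_mor₁ [(tensorLeft X).CommShift ℤ]
    [(tensorLeft X).IsTriangulated] (hT : T ∈ distTriang 𝒜) :
    IsZero (X ⊗ T.obj₃) ↔ IsIso (X ◁ T.mor₁) :=
  Triangle.isZero₃_iff_isIso₁ _ ((tensorLeft X).map_distinguished T hT)

lemma isZero_tensor_obj₁_iff_isIso_whiskerLeft_mor₂ [(tensorLeft X).CommShift ℤ]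
    [(tensorLeft X).IsTriangulated] (hT : T ∈ distTriang 𝒜) :
    IsZero (X ⊗ T.obj₁) ↔ IsIso (X ◁ T.mor₂) :=
  Triangle.isZero₁_iff_isIso₂ _ ((tensorLeft X).map_distinguished T hT)

lemma isZero_obj₃_tensor_iff_isIso_mor₁_whiskerRight [(tensorRight X).CommShift ℤ]
    [(tensorRight X).IsTriangulated] (hT : T ∈ distTriang 𝒜) :
    IsZero (T.obj₃ ⊗ X) ↔ IsIso (T.mor₁ ▷ X) :=
  Triangle.isZero₃_iff_isIso₁ _ ((tensorRight X).map_distinguished T hT)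

lemma isZero_obj₁_tensor_iff_isIso_mor₂_whiskerRight [(tensorRight X).CommShift ℤ]
    [(tensorRight X).IsTriangulated] (hT : T ∈ distTriang 𝒜) :
    IsZero (T.obj₁ ⊗ X) ↔ IsIso (T.mor₂ ▷ X) :=
  Triangle.isZero₁_iff_isIso₂ _ ((tensorRight X).map_distinguished T hT)

end DistinguishedTriangle

variable [∀ X : 𝒜, (tensorLeft X).CommShift ℤ] [∀ X : 𝒜, (tensorRight X).CommShift ℤ]
  [∀ X : 𝒜, (tensorLeft X).IsTriangulated] [∀ X : 𝒜, (tensorRight X).IsTriangulated]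
  {P₁ Q₁ P₂ Q₂ : 𝒜} {ε₁ : P₁ ⟶ 𝟙_ 𝒜} {η₁ : 𝟙_ 𝒜 ⟶ Q₁} {δ₁ : Q₁ ⟶ P₁⟦(1 : ℤ)⟧}
  {ε₂ : P₂ ⟶ 𝟙_ 𝒜} {η₂ : 𝟙_ 𝒜 ⟶ Q₂} {δ₂ : Q₂ ⟶ P₂⟦(1 : ℤ)⟧}

lemma nonempty_fiber_iso_of_isZero_tensor
    (hT₁ : Triangle.mk ε₁ η₁ δ₁ ∈ distTriang 𝒜) (hT₂ : Triangle.mk ε₂ η₂ δ₂ ∈ distTriang 𝒜)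
    (hPQ : IsZero (P₁ ⊗ Q₂)) (hQP : IsZero (Q₁ ⊗ P₂)) : Nonempty (P₁ ≅ P₂) :=
  have : IsIso (P₁ ◁ ε₂) := (isZero_tensor_obj₃_iff_isIso_whiskerLeft_mor₁ P₁ hT₂).1 hPQ
  have : IsIso (ε₁ ▷ P₂) := (isZero_obj₃_tensor_iff_isIso_mor₁_whiskerRight P₂ hT₁).1 hQP
  ⟨counitalComparisonIso ε₁ ε₂⟩

lemma nonempty_cofiber_iso_of_isZero_tensor
    (hT₁ : Triangle.mk ε₁ η₁ δ₁ ∈ distTriang 𝒜) (hT₂ : Triangle.mk ε₂ η₂ δ₂ ∈ distTriang 𝒜)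
    (hPQ : IsZero (P₁ ⊗ Q₂)) (hQP : IsZero (Q₁ ⊗ P₂)) : Nonempty (Q₁ ≅ Q₂) :=
  have : IsIso (Q₁ ◁ η₂) := (isZero_tensor_obj₁_iff_isIso_whiskerLeft_mor₂ Q₁ hT₂).1 hQP
  have : IsIso (η₁ ▷ Q₂) := (isZero_obj₁_tensor_iff_isIso_mor₂_whiskerRight Q₂ hT₁).1 hPQ
  ⟨unitalComparisonIso η₁ η₂⟩

theorem complementary_idempotents_iso_iff_general
    (hT₁ : Triangle.mk ε₁ η₁ δ₁ ∈ distTriang 𝒜) (hT₂ : Triangle.mk ε₂ η₂ δ₂ ∈ distTriang 𝒜)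
    (hP₁ : IsIso (P₁ ◁ ε₁)) (hP₂ : IsIso (ε₂ ▷ P₂)) :
    Nonempty (P₁ ≅ P₂) ↔ Nonempty (Q₁ ≅ Q₂) := by
  have hPQ₁ : IsZero (P₁ ⊗ Q₁) := (isZero_tensor_obj₃_iff_isIso_whiskerLeft_mor₁ P₁ hT₁).2 hP₁
  have hQP₂ : IsZero (Q₂ ⊗ P₂) := (isZero_obj₃_tensor_iff_isIso_mor₁_whiskerRight P₂ hT₂).2 hP₂
  constructor
  · rintro ⟨e⟩
    have hQP : IsZero (Q₂ ⊗ P₁) := hQP₂.of_iso (whiskerLeftIso Q₂ e)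
    have hPQ : IsZero (P₂ ⊗ Q₁) := hPQ₁.of_iso (whiskerRightIso e.symm Q₁)
    exact (nonempty_cofiber_iso_of_isZero_tensor hT₂ hT₁ hPQ hQP).map Iso.symm
  · rintro ⟨e⟩
    have hPQ : IsZero (P₁ ⊗ Q₂) := hPQ₁.of_iso (whiskerLeftIso P₁ e.symm)
    have hQP : IsZero (Q₁ ⊗ P₂) := hQP₂.of_iso (whiskerRightIso e P₂)
    exact nonempty_fiber_iso_of_isZero_tensor hT₁ hT₂ hPQ hQP

end Pretriangulated

/-- Lemma (properties of complementary idempotents, part (4)): given two complementary pairs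
of idempotents `(Pᵢ, εᵢ, Qᵢ, ηᵢ)`, we have `P₁ ≅ P₂` iff `Q₁ ≅ Q₂`. -/
theorem complementary_idempotents_iso_iff {𝒜 : Type*} [Category 𝒜] [MonoidalCategory 𝒜]
    [HasZeroObject 𝒜] [Preadditive 𝒜] [HasShift 𝒜 ℤ]
    [∀ n : ℤ, (shiftFunctor 𝒜 n).Additive] [Pretriangulated 𝒜]
    [∀ X : 𝒜, (tensorLeft X).Additive] [∀ X : 𝒜, (tensorRight X).Additive]
    [∀ X : 𝒜, (tensorLeft X).CommShift ℤ] [∀ X : 𝒜, (tensorRight X).CommShift ℤ]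
    [∀ X : 𝒜, (tensorLeft X).IsTriangulated] [∀ X : 𝒜, (tensorRight X).IsTriangulated]
    (P₁ Q₁ P₂ Q₂ : 𝒜) (ε₁ : P₁ ⟶ 𝟙_ 𝒜) (η₁ : 𝟙_ 𝒜 ⟶ Q₁) (δ₁ : Q₁ ⟶ P₁⟦(1 : ℤ)⟧)
    (ε₂ : P₂ ⟶ 𝟙_ 𝒜) (η₂ : 𝟙_ 𝒜 ⟶ Q₂) (δ₂ : Q₂ ⟶ P₂⟦(1 : ℤ)⟧)
    (hT₁ : Triangle.mk ε₁ η₁ δ₁ ∈ distTriang 𝒜)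
    (hT₂ : Triangle.mk ε₂ η₂ δ₂ ∈ distTriang 𝒜)
    (hP₁ : IsIso ((ε₁ ▷ P₁) ≫ (λ_ P₁).hom) ∧ IsIso ((P₁ ◁ ε₁) ≫ (ρ_ P₁).hom))
    (hP₂ : IsIso ((ε₂ ▷ P₂) ≫ (λ_ P₂).hom) ∧ IsIso ((P₂ ◁ ε₂) ≫ (ρ_ P₂).hom))
    (hQ₁ : IsIso ((λ_ Q₁).inv ≫ (η₁ ▷ Q₁)) ∧ IsIso ((ρ_ Q₁).inv ≫ (Q₁ ◁ η₁)))
    (hQ₂ : IsIso ((λ_ Q₂).inv ≫ (η₂ ▷ Q₂)) ∧ IsIso ((ρ_ Q₂).inv ≫ (Q₂ ◁ η₂))) :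
    Nonempty (P₁ ≅ P₂) ↔ Nonempty (Q₁ ≅ Q₂) :=
  complementary_idempotents_iso_iff_general hT₁ hT₂
    ((isIso_comp_right_iff _ _).1 hP₁.2) ((isIso_comp_right_iff _ _).1 hP₂.1)
end

section
/- Let (P, ε) be a counital idempotent in 𝒜, and write im(P) for the class of objects M with M ⊗ P ≅ M and ker(P) for the class of objects N with N ⊗ P ≅ 0. Then: (a) Hom(M, N) = 0 whenever M ∈ im(P) and N ∈ ker(P); (b) an object M belongs to im(P) if and only if Hom(M, N) = 0 for all N ∈ ker(P); (c) an object N belongs to ker(P) if and only if Hom(M, N) = 0 for all M ∈ im(P). In other words, im(P)ᐩ = ker(P) and ᐩker(P) = im(P) (im(P) and ker(P) are semiorthogonal complements). -/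
open CategoryTheory Category Limits MonoidalCategory Pretriangulated ZeroObject

/-!
Tensoring with `P` on the right is a triangulated endofunctor `F` with a counit `ε : F ⟶ 𝟭` whose
two whiskerings `F ε` and `ε F` are invertible. Naturality of `ε` shows that a morphism out of an
object on which `ε` is invertible vanishes as soon as its target is killed by `F`. Conversely, `F`
kills the cone of `ε_M` because `F ε_M` is invertible; so if `M` has no nonzero morphism to objects
killed by `F`, then `ε_M` has a section, `M` is a retract of `F M`, and `ε_M` is invertible as a
retract of `ε_{F M}`. Finally, if `ε_N = 0` then the invertible morphism `F ε_N` is zero, so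
`F N = 0`.
-/

section Colocalization

variable {C D : Type*} [Category C] [Category D]

lemma isIso_app_of_retract {F G : C ⥤ D} (τ : F ⟶ G) {X Y : C} (h : Retract X Y)
    [hY : IsIso (τ.app Y)] : IsIso (τ.app X) :=
  MorphismProperty.of_retract (P := .isomorphisms D) (NatTrans.retractArrowApp τ h) hY

lemma eq_zero_of_epi_app_of_kernel [HasZeroMorphisms C] {F : C ⥤ C} (ε : F ⟶ 𝟭 C) {M N : C}
    [Epi (ε.app M)] (hN : F.kernel N) (f : M ⟶ N) : f = 0 := by
  rw [← cancel_epi (ε.app M), comp_zero]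
  calc ε.app M ≫ f = F.map f ≫ ε.app N := (ε.naturality f).symm
    _ = 0 := by rw [hN.eq_of_tgt (F.map f) 0, zero_comp]

lemma isSplitEpi_of_isIso_map_of_leftOrthogonal_kernel
    [HasZeroObject C] [Preadditive C] [HasShift C ℤ]
    [∀ n : ℤ, (shiftFunctor C n).Additive] [Pretriangulated C]
    [HasZeroObject D] [Preadditive D] [HasShift D ℤ]
    [∀ n : ℤ, (shiftFunctor D n).Additive] [Pretriangulated D]
    (F : C ⥤ D) [F.CommShift ℤ] [F.IsTriangulated] {X Y : C} {f : X ⟶ Y} (hf : IsIso (F.map f))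
    (hY : F.kernel.leftOrthogonal Y) : IsSplitEpi f := by
  obtain ⟨N, g, δ, hT⟩ := distinguished_cocone_triangle f
  have hN : F.kernel N := Triangle.isZero₃_of_isIso₁ _ (F.map_distinguished _ hT) hf
  have : Epi f := Triangle.epi₁ _ hT (hY g hN)
  exact isSplitEpi_of_epi f

theorem im_ker_semiorthogonal_general [HasZeroObject C] [Preadditive C] [HasShift C ℤ]
    [∀ n : ℤ, (shiftFunctor C n).Additive] [Pretriangulated C]
    {F : C ⥤ C} [F.CommShift ℤ] [F.IsTriangulated] (ε : F ⟶ 𝟭 C)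
    (hFε : ∀ M : C, IsIso (F.map (ε.app M))) (hεF : ∀ M : C, IsIso (ε.app (F.obj M))) :
    (∀ M N : C, Nonempty (F.obj M ≅ M) → Nonempty (F.obj N ≅ 0) → ∀ f : M ⟶ N, f = 0) ∧
    (∀ M : C, Nonempty (F.obj M ≅ M) ↔
      ∀ N : C, Nonempty (F.obj N ≅ 0) → ∀ f : M ⟶ N, f = 0) ∧
    (∀ N : C, Nonempty (F.obj N ≅ 0) ↔
      ∀ M : C, Nonempty (F.obj M ≅ M) → ∀ f : M ⟶ N, f = 0) := by
  have vanishing (M N : C) : Nonempty (F.obj M ≅ M) → Nonempty (F.obj N ≅ 0) →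
      ∀ f : M ⟶ N, f = 0 := by
    rintro ⟨e⟩ ⟨z⟩
    have : IsIso (ε.app M) := isIso_app_of_retract ε (Retract.ofIso e.symm)
    exact eq_zero_of_epi_app_of_kernel ε ((isZero_zero C).of_iso z)
  refine ⟨vanishing, fun M => ⟨fun hM N => vanishing M N hM, fun hM => ?_⟩,
    fun N => ⟨fun hN M hM => vanishing M N hM hN, fun hN => ?_⟩⟩
  · have : IsSplitEpi (ε.app M) :=
      isSplitEpi_of_isIso_map_of_leftOrthogonal_kernel F (hFε M) fun _ g hN =>
        hM _ ⟨hN.isoZero⟩ g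
    have : IsIso (ε.app M) :=
      isIso_app_of_retract ε ⟨section_ (ε.app M), ε.app M, IsSplitEpi.id _⟩
    exact ⟨asIso (ε.app M)⟩
  · have hε : ε.app N = 0 := hN (F.obj N) ⟨asIso (ε.app (F.obj N))⟩ (ε.app N)
    have hN : IsZero (F.obj N) :=
      IsZero.of_epi_eq_zero (F.map (ε.app N)) (by rw [hε, F.map_zero])
    exact ⟨hN.isoZero⟩

end Colocalization

section Monoidal

variable {C : Type*} [Category C] [MonoidalCategory C] {P : C}

/-- The transformation `- ⊗ P ⟶ 𝟭` induced by `ε : P ⟶ 𝟙_ C`; its two whiskerings with `- ⊗ P`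
are invertible when `(P, ε)` is a counital idempotent. -/
@[simps]
def tensorRightCounit (ε : P ⟶ 𝟙_ C) : tensorRight P ⟶ 𝟭 C where
  app M := M ◁ ε ≫ (ρ_ M).hom
  naturality M N f := by
    change f ▷ P ≫ N ◁ ε ≫ (ρ_ N).hom = (M ◁ ε ≫ (ρ_ M).hom) ≫ f
    rw [assoc, ← rightUnitor_naturality, whisker_exchange_assoc]

lemma tensorRightCounit_app_tensor (ε : P ⟶ 𝟙_ C) (M : C) :
    (tensorRightCounit ε).app (M ⊗ P) = (α_ M P P).hom ≫ M ◁ (P ◁ ε ≫ (ρ_ P).hom) := by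
  simp

lemma tensorRightCounit_app_whiskerRight (ε : P ⟶ 𝟙_ C) (M : C) :
    (tensorRightCounit ε).app M ▷ P = (α_ M P P).hom ≫ M ◁ (ε ▷ P ≫ (λ_ P).hom) := by
  simp

lemma isIso_tensorRightCounit_app_tensor {ε : P ⟶ 𝟙_ C}
    (hε : IsIso (P ◁ ε ≫ (ρ_ P).hom)) (M : C) : IsIso ((tensorRightCounit ε).app (M ⊗ P)) := by
  rw [tensorRightCounit_app_tensor]
  infer_instance

lemma isIso_tensorRightCounit_app_whiskerRight {ε : P ⟶ 𝟙_ C}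
    (hε : IsIso (ε ▷ P ≫ (λ_ P).hom)) (M : C) : IsIso ((tensorRightCounit ε).app M ▷ P) := by
  rw [tensorRightCounit_app_whiskerRight]
  infer_instance

end Monoidal

/-- Lemma (semiorthogonality of `im P` and `ker P`): for a counital idempotent `(P, ε)`,
(a) every morphism from an object of `im P` to an object of `ker P` vanishes;
(b) `M ∈ im P` iff `Hom(M, N) = 0` for all `N ∈ ker P`;
(c) `N ∈ ker P` iff `Hom(M, N) = 0` for all `M ∈ im P`. -/
theorem im_ker_semiorthogonal {𝒜 : Type*} [Category 𝒜] [MonoidalCategory 𝒜]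
    [HasZeroObject 𝒜] [Preadditive 𝒜] [HasShift 𝒜 ℤ]
    [∀ n : ℤ, (shiftFunctor 𝒜 n).Additive] [Pretriangulated 𝒜]
    [∀ X : 𝒜, (tensorLeft X).Additive] [∀ X : 𝒜, (tensorRight X).Additive]
    [∀ X : 𝒜, (tensorLeft X).CommShift ℤ] [∀ X : 𝒜, (tensorRight X).CommShift ℤ]
    [∀ X : 𝒜, (tensorLeft X).IsTriangulated] [∀ X : 𝒜, (tensorRight X).IsTriangulated]
    (P : 𝒜) (ε : P ⟶ 𝟙_ 𝒜)
    (hP : IsIso ((ε ▷ P) ≫ (λ_ P).hom) ∧ IsIso ((P ◁ ε) ≫ (ρ_ P).hom)) :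
    (∀ M N : 𝒜, Nonempty (M ⊗ P ≅ M) → Nonempty (N ⊗ P ≅ 0) →
        ∀ f : M ⟶ N, f = 0) ∧
    (∀ M : 𝒜, Nonempty (M ⊗ P ≅ M) ↔
        ∀ N : 𝒜, Nonempty (N ⊗ P ≅ 0) → ∀ f : M ⟶ N, f = 0) ∧
    (∀ N : 𝒜, Nonempty (N ⊗ P ≅ 0) ↔
        ∀ M : 𝒜, Nonempty (M ⊗ P ≅ M) → ∀ f : M ⟶ N, f = 0) :=
  im_ker_semiorthogonal_general (tensorRightCounit ε)
    (isIso_tensorRightCounit_app_whiskerRight hP.1) (isIso_tensorRightCounit_app_tensor hP.2)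
end
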